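/- For every positive integer k, −(k/π) ∫_0^{2π} cos(k x) · log(2 sin(x/2)) dx = 1. -/

import Mathlib

open scoped Real

/-- Sum with `sin (k x) = 2 sin (x/2) * auxH k x`. -/
noncomputable def auxH (k : ℕ) (x : ℝ) : ℝ :=
  ∑ j ∈ Finset.range k, Real.cos ((j : ℝ) * x + x / 2)

lemma auxH_cont (k : ℕ) : Continuous (auxH k) := by
  unfold auxH
  fun_prop

lemma auxH_sin (k : ℕ) (x : ℝ) : Real.sin (k * x) = 2 * Real.sin (x / 2) * auxH k x := by
  unfold auxH
  induction k with
  | zero => simp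
  | succ n ih =>
    rw [Finset.sum_range_succ, mul_add, ← ih]
    have e1 : ((n + 1 : ℕ) : ℝ) * x = ((n : ℝ) * x + x / 2) + x / 2 := by push_cast; ring
    have e2 : (n : ℝ) * x = ((n : ℝ) * x + x / 2) - x / 2 := by ring
    rw [e1, Real.sin_add]
    conv_rhs => rw [e2, Real.sin_sub]
    ring_nf

lemma int_cos (j : ℕ) (hj : j ≠ 0) : ∫ x in (0:ℝ)..(2 * π), Real.cos ((j : ℝ) * x) = 0 := by
  have hj' : (j : ℝ) ≠ 0 := by exact_mod_cast hj
  rw [intervalIntegral.integral_comp_mul_left (fun x => Real.cos x) hj']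
  have : Real.sin ((j : ℝ) * (2 * π)) = 0 := by
    have := Real.sin_nat_mul_pi (j * 2)
    push_cast at this
    rw [← this]; ring_nf
  simp [this]

lemma int_auxH (k : ℕ) (hk : 0 < k) :
    ∫ x in (0:ℝ)..(2 * π), auxH k x * Real.cos (x / 2) = π := by
  have e : ∀ x, auxH k x * Real.cos (x / 2) = ∑ j ∈ Finset.range k,
      (Real.cos (((j + 1 : ℕ) : ℝ) * x) / 2 + Real.cos ((j : ℝ) * x) / 2) := by
    intro x
    unfold auxH
    rw [Finset.sum_mul]
    refine Finset.sum_congr rfl fun j _ => ?_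
    have e1 : ((j + 1 : ℕ) : ℝ) * x = ((j : ℝ) * x + x / 2) + x / 2 := by push_cast; ring
    have e2 : Real.cos ((j : ℝ) * x) = Real.cos (((j : ℝ) * x + x / 2) - x / 2) := by
      congr 1; ring
    rw [e1, e2, Real.cos_add ((j : ℝ) * x + x / 2), Real.cos_sub]
    ring
  simp_rw [e]
  rw [intervalIntegral.integral_finsetSum
    (fun j _ => (by fun_prop : Continuous _).intervalIntegrable _ _)]
  have t : ∀ j ∈ Finset.range k, ∫ x in (0:ℝ)..(2 * π),
      (Real.cos (((j + 1 : ℕ) : ℝ) * x) / 2 + Real.cos ((j : ℝ) * x) / 2)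
      = if j = 0 then π else 0 := by
    intro j _
    rw [intervalIntegral.integral_add
      ((by fun_prop : Continuous _).intervalIntegrable _ _)
      ((by fun_prop : Continuous _).intervalIntegrable _ _),
      intervalIntegral.integral_div, intervalIntegral.integral_div, int_cos _ (Nat.succ_ne_zero j)]
    split_ifs with h
    · subst h; simp
    · rw [int_cos j h]; simp
  rw [Finset.sum_congr rfl t]
  simp [Nat.ne_of_gt hk]

/-- For every positive integer k, -(k/π) ∫₀^{2π} cos(kx) log(2 sin(x/2)) dx = 1. -/
theorem cos_log_sin_integral (k : ℕ) (hk : 0 < k) :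
    -((k : ℝ) / π) *
        ∫ x in (0:ℝ)..(2 * π), Real.cos (k * x) * Real.log (2 * Real.sin (x / 2)) = 1 := by
  have hk' : (k : ℝ) ≠ 0 := by exact_mod_cast hk.ne'
  have hpi := Real.pi_pos
  have hlog : IntervalIntegrable (fun x => Real.log (2 * Real.sin (x / 2)))
      MeasureTheory.volume 0 (2 * π) := by
    apply MeromorphicOn.intervalIntegrable_log (f := fun x => 2 * Real.sin (x / 2))
    intro x _
    apply AnalyticAt.meromorphicAt
    fun_prop
  have hI1 : IntervalIntegrable (fun x => Real.cos (k * x) * Real.log (2 * Real.sin (x / 2)))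
      MeasureTheory.volume 0 (2 * π) :=
    hlog.continuousOn_mul (by fun_prop)
  have hI2 : IntervalIntegrable (fun x => auxH k x * Real.cos (x / 2))
      MeasureTheory.volume 0 (2 * π) :=
    ((auxH_cont k).mul (by fun_prop)).intervalIntegrable _ _
  have hc : Continuous (fun x => Real.sin (k * x) * Real.log (2 * Real.sin (x / 2))) := by
    have : (fun x => Real.sin (k * x) * Real.log (2 * Real.sin (x / 2))) = fun x => auxH k x *
        ((2 * Real.sin (x / 2)) * Real.log (2 * Real.sin (x / 2))) := by
      funext x
      rw [auxH_sin]; ring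
    rw [this]
    exact (auxH_cont k).mul (Real.continuous_mul_log.comp
      (by fun_prop : Continuous fun x : ℝ => 2 * Real.sin (x / 2)))
  have key := intervalIntegral.integral_eq_sub_of_hasDerivAt_of_le
    (f := fun x => Real.sin (k * x) * Real.log (2 * Real.sin (x / 2)))
    (f' := fun x => k * (Real.cos (k * x) * Real.log (2 * Real.sin (x / 2)))
      + auxH k x * Real.cos (x / 2))
    (by positivity : (0:ℝ) ≤ 2 * π) hc.continuousOn
    (by
      intro x hx
      have hs : 0 < Real.sin (x / 2) :=
        Real.sin_pos_of_pos_of_lt_pi (by linarith [hx.1]) (by linarith [hx.2])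
      have h1 : HasDerivAt (fun x : ℝ => Real.sin (k * x)) (Real.cos (k * x) * (k * 1)) x :=
        ((hasDerivAt_id x).const_mul (k : ℝ)).sin
      have h2 : HasDerivAt (fun x : ℝ => Real.log (2 * Real.sin (x / 2)))
          (2 * (Real.cos (x / 2) * (1 / 2)) / (2 * Real.sin (x / 2))) x :=
        ((((hasDerivAt_id x).div_const 2).sin).const_mul 2).log (by positivity)
      refine (h1.mul h2).congr_deriv ?_
      rw [auxH_sin]
      field_simp)
    ((hI1.const_mul _).add hI2)
  rw [intervalIntegral.integral_add (hI1.const_mul _) hI2, int_auxH k hk,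
    intervalIntegral.integral_const_mul] at key
  simp at key
  generalize (∫ x in (0:ℝ)..(2 * π), Real.cos (k * x) * Real.log (2 * Real.sin (x / 2))) = I
    at key ⊢
  field_simp
  linarith
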